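/- arXiv:math/0403427 — 4 statements merged into one kernel-verified Lean document; each statement's English description precedes it below -/
import Mathlib

section
/- Let X be a nonempty compact connected Hausdorff space and f : X → X a homeomorphism. Let n ≥ 1 and let N_1, …, N_n be pairwise disjoint compact proper subsets of X, each with nonempty interior. Suppose the index set {1, …, n} is partitioned into two sets A and R such that: for i ∈ A one has f(N_i) ⊆ int(N_i) and S_i := ⋂_{h≥1} f^h(N_i), while for j ∈ R one has f^{-1}(N_j) ⊆ int(N_j) and S_j := ⋂_{h≥1} f^{-h}(N_j). Assume that the nonwandering set Ω(f) equals S_1 ∪ … ∪ S_n, and assume that both X ∖ ⋃_{j∈R} S_j and X ∖ ⋃_{i∈A} S_i are connected. Then n = 2 and A and R each consist of exactly one index; that is, Ω(f) is the union of exactly one attractor of f and one attractor of f^{-1}. (This is Lemma 1 of the paper, stated in topological form; in the paper the connectivity hypotheses hold automatically because each S_i is a Smale solenoid in a closed 3-manifold.) -/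
/-- The nonwandering set of a map `f`: points `x` such that for every neighborhood `U`
of `x` there are infinitely many positive integers `n` with `f^n(U) ∩ U ≠ ∅`. -/
def nonwanderingSet {X : Type*} [TopologicalSpace X] (f : X → X) : Set X :=
  {x | ∀ U ∈ nhds x, {n : ℕ | 0 < n ∧ ((f^[n]) '' U ∩ U).Nonempty}.Infinite}

theorem nonwandering_symm {X : Type*} [TopologicalSpace X] (f : X ≃ₜ X) :
    nonwanderingSet ⇑f.symm ⊆ nonwanderingSet ⇑f := by
  intro x hx U hU
  refine (hx U hU).mono ?_
  rintro n ⟨hn, y, ⟨z, hz, rfl⟩, hy⟩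
  refine ⟨hn, z, ⟨_, hy, ?_⟩, hz⟩
  exact (Function.LeftInverse.iterate f.apply_symm_apply n) z

theorem cluster_nonwandering {X : Type*} [TopologicalSpace X] (f : X → X) (x y : X)
    (hy : MapClusterPt y Filter.atTop (fun k : ℕ => f^[k] x)) : y ∈ nonwanderingSet f := by
  intro U hU
  have hfr := mapClusterPt_iff_frequently.1 hy U hU
  rw [Filter.frequently_atTop] at hfr
  obtain ⟨k0, -, hk0⟩ := hfr 0
  rw [Set.infinite_iff_exists_gt]
  intro a
  obtain ⟨k, hk, hkU⟩ := hfr (k0 + a + 1)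
  refine ⟨k - k0, ⟨by omega, f^[k] x, ⟨_, hk0, ?_⟩, hkU⟩, by omega⟩
  rw [← Function.iterate_add_apply]
  congr 2
  omega

theorem card_attr {X : Type*} [TopologicalSpace X] [CompactSpace X] (f : X ≃ₜ X)
    {n : ℕ} (N : Fin n → Set X) (S : Fin n → Set X)
    (hint : ∀ i, (interior (N i)).Nonempty)
    (hdisj : Pairwise fun i j => Disjoint (N i) (N j))
    (A R : Finset (Fin n)) (hcov : ∀ i, i ∈ A ∨ i ∈ R) (hAR : Disjoint A R)
    (hA : ∀ i ∈ A, (⇑f) '' (N i) ⊆ interior (N i) ∧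
      S i = ⋂ h ∈ {h : ℕ | 1 ≤ h}, (⇑f)^[h] '' (N i))
    (hR : ∀ j ∈ R, (⇑f.symm) '' (N j) ⊆ interior (N j) ∧
      S j = ⋂ h ∈ {h : ℕ | 1 ≤ h}, (⇑f.symm)^[h] '' (N j))
    (hΩ : nonwanderingSet ⇑f ⊆ ⋃ i, S i)
    (hconnR : IsConnected (Set.univ \ ⋃ j ∈ R, S j)) : A.card = 1 := by
  classical
  have hfwd : ∀ i ∈ A, ∀ x ∈ N i, f x ∈ N i := fun i hi x hx =>
    interior_subset ((hA i hi).1 ⟨x, hx, rfl⟩)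
  have hfwdk : ∀ i ∈ A, ∀ k x, x ∈ N i → f^[k] x ∈ N i := by
    intro i hi k
    induction k with
    | zero => intro x hx; exact hx
    | succ k ih => intro x hx; rw [Function.iterate_succ_apply]; exact ih _ (hfwd i hi x hx)
  have hmono : ∀ i ∈ A, ∀ k l x, k ≤ l → f^[k] x ∈ N i → f^[l] x ∈ N i := by
    intro i hi k l x hkl hx
    obtain ⟨m, rfl⟩ := Nat.exists_eq_add_of_le' hkl
    rw [Function.iterate_add_apply]
    exact hfwdk i hi m _ hx
  have hbwd : ∀ j ∈ R, ∀ x, f x ∈ N j → x ∈ N j := fun j hj x hx =>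
    interior_subset ((hR j hj).1 ⟨f x, hx, f.symm_apply_apply x⟩)
  have hbwdk : ∀ j ∈ R, ∀ m x, f^[m] x ∈ N j → x ∈ N j := by
    intro j hj m
    induction m with
    | zero => intro x hx; exact hx
    | succ k ih =>
      intro x hx; rw [Function.iterate_succ_apply] at hx; exact hbwd j hj _ (ih _ hx)
  have hbmono : ∀ j ∈ R, ∀ k l x, k ≤ l → f^[l] x ∈ N j → f^[k] x ∈ N j := by
    intro j hj k l x hkl hx
    obtain ⟨m, rfl⟩ := Nat.exists_eq_add_of_le' hkl
    rw [Function.iterate_add_apply] at hx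
    exact hbwdk j hj m _ hx
  have hSR : ∀ j ∈ R, ∀ x, x ∈ S j ↔ ∀ k, 1 ≤ k → f^[k] x ∈ N j := by
    intro j hj x
    rw [(hR j hj).2]
    simp only [Set.mem_iInter, Set.mem_ofPred_eq]
    refine forall₂_congr fun k _ => ?_
    constructor
    · rintro ⟨z, hz, rfl⟩
      rw [Function.LeftInverse.iterate f.apply_symm_apply k z]
      exact hz
    · intro h
      exact ⟨_, h, Function.LeftInverse.iterate f.symm_apply_apply k x⟩
  have hSint : ∀ i, S i ⊆ interior (N i) := by
    intro i x hx
    rcases hcov i with hi | hi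
    · rw [(hA i hi).2] at hx
      have := Set.mem_iInter₂.1 hx 1 (le_refl 1)
      exact (hA i hi).1 (by simpa using this)
    · rw [(hR i hi).2] at hx
      have := Set.mem_iInter₂.1 hx 1 (le_refl 1)
      exact (hR i hi).1 (by simpa using this)
  let B : Fin n → Set X := fun i => ⋃ k : ℕ, f^[k] ⁻¹' interior (N i)
  have hBo : ∀ i, IsOpen (B i) := fun i =>
    isOpen_iUnion fun k => isOpen_interior.preimage (f.continuous.iterate k)
  have hBne : ∀ i, (B i).Nonempty := fun i => by
    obtain ⟨x, hx⟩ := hint i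
    exact ⟨x, Set.mem_iUnion.2 ⟨0, hx⟩⟩
  have hBd : ∀ i ∈ A, ∀ j ∈ A, i ≠ j → ∀ x, x ∈ B i → x ∈ B j → False := by
    intro i hi j hj hij x hxi hxj
    obtain ⟨k, hk⟩ := Set.mem_iUnion.1 hxi
    obtain ⟨l, hl⟩ := Set.mem_iUnion.1 hxj
    exact Set.disjoint_left.1 (hdisj hij)
      (hmono i hi k (max k l) x (le_max_left _ _) (interior_subset hk))
      (hmono j hj l (max k l) x (le_max_right _ _) (interior_subset hl))
  have hBS : ∀ i ∈ A, B i ⊆ Set.univ \ ⋃ j ∈ R, S j := by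
    intro i hi x hx
    refine ⟨trivial, fun hxS => ?_⟩
    obtain ⟨j, hj, hxj⟩ := Set.mem_iUnion₂.1 hxS
    obtain ⟨k, hk⟩ := Set.mem_iUnion.1 hx
    have hij : i ≠ j := fun h => Finset.disjoint_left.1 hAR hi (h ▸ hj)
    exact Set.disjoint_left.1 (hdisj hij)
      (hmono i hi k (k + 1) x (Nat.le_succ k) (interior_subset hk))
      ((hSR j hj x).1 hxj (k + 1) (by omega))
  have hcover : ∀ x ∈ Set.univ \ ⋃ j ∈ R, S j, ∃ i ∈ A, x ∈ B i := by
    rintro x ⟨-, hx⟩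
    obtain ⟨y, -, hy⟩ := isCompact_univ.exists_mapClusterPt (f := Filter.atTop)
      (u := fun k : ℕ => f^[k] x) (by simp)
    obtain ⟨i, hi⟩ := Set.mem_iUnion.1 (hΩ (cluster_nonwandering f x y hy))
    have hfr := mapClusterPt_iff_frequently.1 hy _ (isOpen_interior.mem_nhds (hSint i hi))
    rw [Filter.frequently_atTop] at hfr
    rcases hcov i with hiA | hiR
    · obtain ⟨k, -, hk⟩ := hfr 0
      exact ⟨i, hiA, Set.mem_iUnion.2 ⟨k, hk⟩⟩
    · refine absurd (Set.mem_iUnion₂.2 ⟨i, hiR, (hSR i hiR x).2 fun k _ => ?_⟩) hx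
      obtain ⟨l, hl, hlN⟩ := hfr k
      exact hbmono i hiR k l x hl (interior_subset hlN)
  obtain ⟨x0, hx0⟩ := hconnR.nonempty
  obtain ⟨i, hi, -⟩ := hcover x0 hx0
  rw [Finset.card_eq_one]
  refine ⟨i, Finset.eq_singleton_iff_unique_mem.2 ⟨hi, fun j hj => ?_⟩⟩
  by_contra hji
  obtain ⟨a, ha⟩ := hBne i
  obtain ⟨b, hb⟩ := hBne j
  obtain ⟨z, -, hz1, hz2⟩ := hconnR.isPreconnected (B i) (⋃ l ∈ A.erase i, B l) (hBo i)
    (isOpen_biUnion fun l _ => hBo l)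
    (by
      intro x hx
      obtain ⟨l, hl, hxl⟩ := hcover x hx
      by_cases h : l = i
      · left; rw [← h]; exact hxl
      · right; exact Set.mem_iUnion₂.2 ⟨l, Finset.mem_erase.2 ⟨h, hl⟩, hxl⟩)
    ⟨a, hBS i hi ha, ha⟩
    ⟨b, hBS j hj hb, Set.mem_iUnion₂.2 ⟨j, Finset.mem_erase.2 ⟨hji, hj⟩, hb⟩⟩
  obtain ⟨l, hl, hzl⟩ := Set.mem_iUnion₂.1 hz2
  obtain ⟨hli, hlA⟩ := Finset.mem_erase.1 hl
  exact hBd i hi l hlA (Ne.symm hli) z hz1 hzl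

/-- Lemma 1 of the paper (topological form): if the nonwandering set of a homeomorphism of a
nonempty compact connected Hausdorff space is a disjoint union of attractors of `f` (indices in
`A`) and attractors of `f⁻¹` (indices in `R`) arising from pairwise disjoint compact proper
trapping regions with nonempty interior, and the complements of the union of the repelling
(resp. attracting) pieces are connected, then there is exactly one attractor and exactly one
repeller. -/
theorem one_attractor_one_repeller {X : Type*} [TopologicalSpace X] [CompactSpace X]
    [ConnectedSpace X] [T2Space X] [Nonempty X] (f : X ≃ₜ X)
    {n : ℕ} (hn : 1 ≤ n) (N : Fin n → Set X) (S : Fin n → Set X)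
    (hcompact : ∀ i, IsCompact (N i))
    (hproper : ∀ i, N i ≠ Set.univ)
    (hint : ∀ i, (interior (N i)).Nonempty)
    (hdisj : Pairwise fun i j => Disjoint (N i) (N j))
    (A R : Finset (Fin n)) (hpart : A ∪ R = Finset.univ) (hAR : Disjoint A R)
    (hA : ∀ i ∈ A, (⇑f) '' (N i) ⊆ interior (N i) ∧
      S i = ⋂ h ∈ {h : ℕ | 1 ≤ h}, (⇑f)^[h] '' (N i))
    (hR : ∀ j ∈ R, (⇑f.symm) '' (N j) ⊆ interior (N j) ∧
      S j = ⋂ h ∈ {h : ℕ | 1 ≤ h}, (⇑f.symm)^[h] '' (N j))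
    (hΩ : nonwanderingSet ⇑f = ⋃ i, S i)
    (hconnR : IsConnected (Set.univ \ ⋃ j ∈ R, S j))
    (hconnA : IsConnected (Set.univ \ ⋃ i ∈ A, S i)) :
    n = 2 ∧ A.card = 1 ∧ R.card = 1 := by
  classical
  have hcov : ∀ i, i ∈ A ∨ i ∈ R := fun i => by
    have : i ∈ A ∪ R := hpart ▸ Finset.mem_univ i
    simpa using this
  have h1 : A.card = 1 := card_attr f N S hint hdisj A R hcov hAR hA hR hΩ.subset hconnR
  have h2 : R.card = 1 := by
    refine card_attr f.symm N S hint hdisj R A (fun i => (hcov i).symm) hAR.symm hR ?_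
      ((nonwandering_symm f).trans hΩ.subset) hconnA
    simpa using hA
  refine ⟨?_, h1, h2⟩
  have h3 := Finset.card_union_of_disjoint hAR
  rw [hpart, h1, h2] at h3
  simpa using h3
end

section
/- Let X be a compact Hausdorff space and f : X → X a homeomorphism. Let N_1 and N_2 be disjoint compact subsets with f(N_1) ⊆ int(N_1) and f^{-1}(N_2) ⊆ int(N_2), and set S_1 = ⋂_{h≥1} f^h(N_1) and S_2 = ⋂_{h≥1} f^{-h}(N_2). If the nonwandering set satisfies Ω(f) ⊆ S_1 ∪ S_2, then ⋃_{h≥1} f^{-h}(int(N_1)) = X ∖ S_2; that is, the basin of the attractor S_1 is exactly the complement of the repeller S_2. (This is the first assertion in the proof of Lemma 2 of the paper.) -/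
/-- First assertion in the proof of Lemma 2: if the nonwandering set is contained in the union
of the attractor `S₁` and the repeller `S₂`, then the basin of `S₁` is exactly the complement
of `S₂`. -/
theorem basin_eq_compl_repeller {X : Type*} [TopologicalSpace X] [CompactSpace X] [T2Space X]
    (f : X ≃ₜ X) (N₁ N₂ : Set X)
    (h₁comp : IsCompact N₁) (h₂comp : IsCompact N₂) (hdisj : Disjoint N₁ N₂)
    (h₁trap : (⇑f) '' N₁ ⊆ interior N₁) (h₂trap : (⇑f.symm) '' N₂ ⊆ interior N₂)
    (S₁ S₂ : Set X)
    (hS₁ : S₁ = ⋂ h ∈ {h : ℕ | 1 ≤ h}, (⇑f)^[h] '' N₁)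
    (hS₂ : S₂ = ⋂ h ∈ {h : ℕ | 1 ≤ h}, (⇑f.symm)^[h] '' N₂)
    (hΩ : nonwanderingSet ⇑f ⊆ S₁ ∪ S₂) :
    (⋃ h ∈ {h : ℕ | 1 ≤ h}, (⇑f.symm)^[h] '' (interior N₁)) = S₂ᶜ := by
  have hinv : ∀ n : ℕ, Function.LeftInverse ((⇑f.symm)^[n]) ((⇑f)^[n]) := fun n =>
    Function.LeftInverse.iterate f.symm_apply_apply n
  have hinv' : ∀ n : ℕ, Function.LeftInverse ((⇑f)^[n]) ((⇑f.symm)^[n]) := fun n =>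
    Function.LeftInverse.iterate f.apply_symm_apply n
  have key : ∀ (n : ℕ) (A : Set X) (x : X), x ∈ (⇑f.symm)^[n] '' A ↔ (⇑f)^[n] x ∈ A := by
    intro n A x
    constructor
    · rintro ⟨a, ha, rfl⟩
      rw [hinv' n a]
      exact ha
    · intro h
      exact ⟨_, h, hinv n x⟩
  ext x
  simp only [Set.mem_iUnion, Set.mem_compl_iff, hS₂, Set.mem_iInter, key, Set.mem_setOf_eq]
  push Not
  constructor
  · rintro ⟨h, h1, hx⟩
    exact ⟨h, h1, fun h2 => Set.disjoint_left.1 hdisj (interior_subset hx) h2⟩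
  · rintro ⟨h, h1, hx⟩
    have hout : ∀ n, h ≤ n → (⇑f)^[n] x ∉ N₂ := by
      intro n hn
      induction n, hn using Nat.le_induction with
      | base => exact hx
      | succ n hn ih =>
        intro hc
        rw [Function.iterate_succ_apply'] at hc
        exact ih (interior_subset (h₂trap ⟨_, hc, f.symm_apply_apply _⟩))
    obtain ⟨y, hy⟩ := exists_clusterPt_of_compactSpace
      (Filter.map (fun n : ℕ => (⇑f)^[n] x) Filter.atTop)
    have hfreq : ∀ U ∈ nhds y, ∀ N : ℕ, ∃ n, N ≤ n ∧ (⇑f)^[n] x ∈ U := by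
      intro U hU N
      have hm : MapClusterPt y Filter.atTop (fun n : ℕ => (⇑f)^[n] x) := hy
      obtain ⟨n, hn, hnU⟩ := Filter.frequently_atTop.1 (hm.frequently hU) N
      exact ⟨n, hn, hnU⟩
    have hyΩ : y ∈ nonwanderingSet ⇑f := by
      intro U hU
      obtain ⟨m, -, hm⟩ := hfreq U hU 0
      rw [Set.infinite_iff_exists_gt]
      intro a
      obtain ⟨n, hn, hnU⟩ := hfreq U hU (m + a + 1)
      refine ⟨n - m, ⟨by omega, (⇑f)^[n] x, ⟨_, hm, ?_⟩, hnU⟩, by omega⟩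
      rw [← Function.iterate_add_apply]
      congr 2
      omega
    rcases hΩ hyΩ with h | h
    · rw [hS₁] at h
      have h' := Set.mem_iInter₂.1 h 1 (le_refl 1)
      rw [Function.iterate_one] at h'
      obtain ⟨n, hn, hnU⟩ := hfreq _ (isOpen_interior.mem_nhds (h₁trap h')) 1
      exact ⟨n, hn, hnU⟩
    · rw [hS₂] at h
      have h' := Set.mem_iInter₂.1 h 1 (le_refl 1)
      rw [Function.iterate_one] at h'
      obtain ⟨n, hn, hnU⟩ := hfreq _ (isOpen_interior.mem_nhds (h₂trap h')) _
      exact absurd (interior_subset hnU) (hout n hn)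
end

section
/- Let X be a compact Hausdorff space and f : X → X a homeomorphism. Suppose N_1 and N_2 are compact subsets with X = N_1 ∪ N_2, f^{-1}(N_1) ⊆ int(N_1), and f(N_2) ⊆ int(N_2). Set S_1 = ⋂_{h≥1} f^{-h}(N_1) and S_2 = ⋂_{h≥1} f^h(N_2). Then every point x ∉ S_1 is attracted to S_2 under forward iteration: for every open set O containing S_2 there exists n_0 such that f^n(x) ∈ O for all n ≥ n_0. (This is the final assertion in the proof of the IF part of Theorem 2 of the paper.) -/
/-- If `X = N₁ ∪ N₂` with `N₁` a trapping region for `f⁻¹` and `N₂` a trapping region for `f`,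
then every point outside the repeller `S₁ = ⋂_{h ≥ 1} f^{-h}(N₁)` is attracted to the attractor
`S₂ = ⋂_{h ≥ 1} f^h(N₂)` under forward iteration. -/
theorem attracted_to_attractor {X : Type*} [TopologicalSpace X] [CompactSpace X] [T2Space X]
    (f : X ≃ₜ X) (N₁ N₂ : Set X)
    (h₁comp : IsCompact N₁) (h₂comp : IsCompact N₂) (hcover : N₁ ∪ N₂ = Set.univ)
    (h₁trap : (⇑f.symm) '' N₁ ⊆ interior N₁) (h₂trap : (⇑f) '' N₂ ⊆ interior N₂)
    (S₁ S₂ : Set X)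
    (hS₁ : S₁ = ⋂ h ∈ {h : ℕ | 1 ≤ h}, (⇑f.symm)^[h] '' N₁)
    (hS₂ : S₂ = ⋂ h ∈ {h : ℕ | 1 ≤ h}, (⇑f)^[h] '' N₂) :
    ∀ x : X, x ∉ S₁ → ∀ O : Set X, IsOpen O → S₂ ⊆ O →
      ∃ n₀ : ℕ, ∀ n ≥ n₀, (⇑f)^[n] x ∈ O := by
  intro x hx O hO hSO
  have hf : ∀ y ∈ N₂, f y ∈ N₂ := fun y hy => interior_subset (h₂trap ⟨y, hy, rfl⟩)
  have hx' : ∃ h : ℕ, (⇑f)^[h] x ∈ N₂ := by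
    by_contra hcon
    push Not at hcon
    apply hx
    rw [hS₁]
    simp only [Set.mem_iInter]
    intro h _
    have h1 : (⇑f)^[h] x ∈ N₁ ∪ N₂ := by rw [hcover]; trivial
    refine ⟨(⇑f)^[h] x, h1.resolve_right (hcon h), ?_⟩
    exact (Function.LeftInverse.iterate f.symm_apply_apply h) x
  obtain ⟨h, hh⟩ := hx'
  have hanti : Antitone (fun k : ℕ => (⇑f)^[k+1] '' N₂) := by
    apply antitone_nat_of_succ_le
    rintro k _ ⟨y, hy, rfl⟩
    exact ⟨f y, hf y hy, by rw [Function.iterate_succ_apply (n := k+1)]⟩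
  have hcomp : ∀ k : ℕ, IsCompact ((⇑f)^[k+1] '' N₂) :=
    fun k => h₂comp.image (f.continuous.iterate _)
  obtain ⟨k, hk⟩ := exists_subset_nhds_of_isCompact (V := fun k : ℕ => (⇑f)^[k+1] '' N₂)
    hanti.directed_ge hcomp (U := O) (by
      intro y hy
      apply hO.mem_nhds
      apply hSO
      rw [hS₂]
      simp only [Set.mem_iInter] at hy ⊢
      intro m hm
      obtain ⟨j, rfl⟩ : ∃ j, m = j + 1 := ⟨m - 1, by have : 1 ≤ m := hm; omega⟩
      exact hy j)
  refine ⟨k + 1 + h, fun n hn => hk (hanti (show k ≤ n - h - 1 by omega) ?_)⟩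
  refine ⟨(⇑f)^[h] x, hh, ?_⟩
  rw [← Function.iterate_add_apply]
  congr 2
  omega
end

section
/- Let X be a compact Hausdorff space and f : X → X a homeomorphism. Suppose N_1 and N_2 are compact subsets with X = N_1 ∪ N_2, f^{-1}(N_1) ⊆ int(N_1), and f(N_2) ⊆ int(N_2). Set S_1 = ⋂_{h≥1} f^{-h}(N_1) and S_2 = ⋂_{h≥1} f^h(N_2). Then the nonwandering set of f is contained in S_1 ∪ S_2: Ω(f) ⊆ S_1 ∪ S_2. (This is the concluding step in the proof of the IF part of Theorem 2 of the paper, showing that the constructed diffeomorphism has nonwandering set equal to the union of the two solenoids.) -/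
/-- If `X = N₁ ∪ N₂` with `N₁` a trapping region for `f⁻¹` and `N₂` a trapping region for `f`,
then the nonwandering set of `f` is contained in the union of the repeller
`S₁ = ⋂_{h ≥ 1} f^{-h}(N₁)` and the attractor `S₂ = ⋂_{h ≥ 1} f^h(N₂)`. -/
theorem nonwandering_subset_union {X : Type*} [TopologicalSpace X] [CompactSpace X] [T2Space X]
    (f : X ≃ₜ X) (N₁ N₂ : Set X)
    (h₁comp : IsCompact N₁) (h₂comp : IsCompact N₂) (hcover : N₁ ∪ N₂ = Set.univ)
    (h₁trap : (⇑f.symm) '' N₁ ⊆ interior N₁) (h₂trap : (⇑f) '' N₂ ⊆ interior N₂)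
    (S₁ S₂ : Set X)
    (hS₁ : S₁ = ⋂ h ∈ {h : ℕ | 1 ≤ h}, (⇑f.symm)^[h] '' N₁)
    (hS₂ : S₂ = ⋂ h ∈ {h : ℕ | 1 ≤ h}, (⇑f)^[h] '' N₂) :
    nonwanderingSet ⇑f ⊆ S₁ ∪ S₂ := by
  intro x hx
  by_contra hxS
  rw [Set.mem_union, not_or] at hxS
  obtain ⟨hx1, hx2⟩ := hxS
  have hl : ∀ n : ℕ, Function.LeftInverse (⇑f.symm)^[n] (⇑f)^[n] := fun n =>
    Function.LeftInverse.iterate f.symm_apply_apply n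
  have hr : ∀ n : ℕ, Function.LeftInverse (⇑f)^[n] (⇑f.symm)^[n] := fun n =>
    Function.LeftInverse.iterate f.apply_symm_apply n
  have e1 : ∃ h : ℕ, (⇑f)^[h] x ∉ N₁ := by
    by_contra hc
    push Not at hc
    apply hx1
    rw [hS₁]
    exact Set.mem_iInter₂.2 fun h _ => ⟨_, hc h, hl h x⟩
  have e2 : ∃ k : ℕ, (⇑f.symm)^[k] x ∉ N₂ := by
    by_contra hc
    push Not at hc
    apply hx2
    rw [hS₂]
    exact Set.mem_iInter₂.2 fun h _ => ⟨_, hc h, hr h x⟩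
  obtain ⟨h, hh⟩ := e1
  obtain ⟨k, hk⟩ := e2
  have o1 : IsOpen ((⇑f)^[h] ⁻¹' N₁ᶜ) :=
    h₁comp.isClosed.isOpen_compl.preimage (f.continuous.iterate h)
  have o2 : IsOpen ((⇑f.symm)^[k] ⁻¹' N₂ᶜ) :=
    h₂comp.isClosed.isOpen_compl.preimage (f.symm.continuous.iterate k)
  obtain ⟨n, ⟨_, z, ⟨y, hy, rfl⟩, hz⟩, hn⟩ :=
    (hx _ ((o1.inter o2).mem_nhds ⟨hh, hk⟩)).exists_gt (h + k)
  have hyN : (⇑f)^[h] y ∈ N₂ := by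
    have : (⇑f)^[h] y ∈ N₁ ∪ N₂ := hcover ▸ Set.mem_univ _
    exact this.resolve_left hy.1
  have hmaps : Set.MapsTo (⇑f) N₂ N₂ := fun a ha =>
    interior_subset (h₂trap ⟨a, ha, rfl⟩)
  apply hz.2
  obtain ⟨m, rfl⟩ : ∃ m, n = k + (m + h) := ⟨n - k - h, by omega⟩
  rw [Function.iterate_add_apply, hl, Function.iterate_add_apply]
  exact hmaps.iterate m hyN
end
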